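/- Let n ≥ 5, let Γ be a 3-homogeneous access structure on n players satisfying monotonicity, no-cloning and no-redundancy, and let ψ be a pure QSS state for Γ. Then the (n+1)-qubit state ψ is 3-uniform: for every subset A of its qubit positions with |A| ≤ 3, the reduction of ψ to A is maximally mixed. -/

import Mathlib

open Finset

/-- Monotonicity of an access structure on `n` players (players = `Fin n`). -/
def Monotonic {n : ℕ} (Γ : Finset (Fin n) → Prop) : Prop :=
  ∀ A B : Finset (Fin n), Γ A → A ⊆ B → Γ B

/-- No-cloning: a set is authorized iff its complement is not. -/
def NoCloning {n : ℕ} (Γ : Finset (Fin n) → Prop) : Prop :=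
  ∀ A : Finset (Fin n), Γ A ↔ ¬ Γ Aᶜ

/-- `A` is a minimal authorized set of `Γ`. -/
def IsMinimal {n : ℕ} (Γ : Finset (Fin n) → Prop) (A : Finset (Fin n)) : Prop :=
  Γ A ∧ ∀ B : Finset (Fin n), B ⊂ A → ¬ Γ B

/-- No-redundancy: every player lies in some minimal authorized set. -/
def NoRedundancy {n : ℕ} (Γ : Finset (Fin n) → Prop) : Prop :=
  ∀ i : Fin n, ∃ A : Finset (Fin n), IsMinimal Γ A ∧ i ∈ A

noncomputable section

/-- Combine an assignment on `A` and one on `Aᶜ` into a full bit string. -/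
def glue {m : ℕ} (A : Finset (Fin m)) (u : {x // x ∈ A} → Fin 2)
    (w : {x // x ∈ Aᶜ} → Fin 2) : Fin m → Fin 2 :=
  fun x => if h : x ∈ A then u ⟨x, h⟩ else w ⟨x, Finset.mem_compl.mpr h⟩

/-- Reduced density matrix of the pure state `ψ` on the qubit positions in `A`:
the partial trace over the positions outside `A` of `ψψ†`. -/
def reducedDensity {m : ℕ} (ψ : (Fin m → Fin 2) → ℂ) (A : Finset (Fin m)) :
    Matrix ({x // x ∈ A} → Fin 2) ({x // x ∈ A} → Fin 2) ℂ :=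
  fun u v => ∑ w : {x // x ∈ Aᶜ} → Fin 2,
    ψ (glue A u w) * (starRingEnd ℂ) (ψ (glue A v w))

/-- The reduction of `ψ` to `A` is maximally mixed, i.e. equals `2^{-|A|} · I`. -/
def MaximallyMixed {m : ℕ} (ψ : (Fin m → Fin 2) → ℂ) (A : Finset (Fin m)) : Prop :=
  reducedDensity ψ A =
    ((2 : ℂ) ^ A.card)⁻¹ •
      (1 : Matrix ({x // x ∈ A} → Fin 2) ({x // x ∈ A} → Fin 2) ℂ)

open Classical in
/-- Von Neumann entropy (natural logarithm): sum of `-λ log λ` over the eigenvalues. -/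
def vnEntropy {ι : Type} [Fintype ι] [DecidableEq ι] (ρ : Matrix ι ι ℂ) : ℝ :=
  if h : ρ.IsHermitian then ∑ i, Real.negMulLog (h.eigenvalues i) else 0

/-- Entropy of the reduction of `ψ` to the set `A` of qubit positions. -/
def Sent {m : ℕ} (ψ : (Fin m → Fin 2) → ℂ) (A : Finset (Fin m)) : ℝ :=
  vnEntropy (reducedDensity ψ A)

/-- The qubit positions (in `{0,1,…,n} = Fin (n+1)`, where `0` is the reference qubit)
of a set of players `A ⊆ Fin n`: player `i` holds position `i.succ`. -/
def posOf {n : ℕ} (A : Finset (Fin n)) : Finset (Fin (n + 1)) := A.image Fin.succ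

/-- `ψ` is a pure QSS state for the access structure `Γ`: a normalized pure state of
`n+1` qubits (position `0` being the reference qubit `R`) satisfying Recoverability
`S(R) + S(A) - S(R ∪ A) = 2 log 2` for authorized `A` and Secrecy
`S(R) + S(B) - S(R ∪ B) = 0` for unauthorized `B`. -/
structure IsPureQSSState {n : ℕ} (Γ : Finset (Fin n) → Prop)
    (ψ : (Fin (n + 1) → Fin 2) → ℂ) : Prop where
  normalized : ∑ x : Fin (n + 1) → Fin 2, ‖ψ x‖ ^ 2 = 1
  recover : ∀ A : Finset (Fin n), Γ A →
    Sent ψ {0} + Sent ψ (posOf A) - Sent ψ (insert 0 (posOf A)) = 2 * Real.log 2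
  secrecy : ∀ B : Finset (Fin n), ¬ Γ B →
    Sent ψ {0} + Sent ψ (posOf B) - Sent ψ (insert 0 (posOf B)) = 0

end

/-!
Adjoining a qubit `k` to a set `A` raises the entropy by at most `log 2`, and when it does raise it
by `log 2` the reduced state factors as `ρ_{A ∪ {k}} = ρ_A ⊗ I/2`, so that adjoining `k` preserves
maximal mixedness. If a player is pivotal for an unauthorized set `B`, secrecy of `B` and
recoverability after the player joins force this extremal increase, for `B` and hence for all its
subsets. A set of players each of whose nonempty subsets contains a player pivotal for some superset
of the remaining ones is therefore maximally mixed.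

No-redundancy and no-cloning provide pivots for singletons and pairs. A triple `T` without a pivot
leaves only one possibility: there are six players, and `T` completed by any outside player is
authorized. Exchanging one member of `T` for an outsider then yields an authorized triple whose
complementary triple is maximally mixed. This contradicts recoverability, since a maximally mixed
complement forces an authorized set to be strictly larger than its complement. Finally, the
reference qubit is extremal over every unauthorized set by secrecy, in particular over every set of
at most two players.
-/

section VonNeumannEntropy

open scoped ComplexOrder Matrix

variable {ι κ : Type} [Fintype ι] [DecidableEq ι] [Fintype κ] [DecidableEq κ]

lemma vnEntropy_eq_sum_eigenvalues {ρ : Matrix ι ι ℂ} (hρ : ρ.IsHermitian) :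
    vnEntropy ρ = ∑ i, Real.negMulLog (hρ.eigenvalues i) :=
  dif_pos hρ

lemma vnEntropy_eq_sum_roots_charpoly {ρ : Matrix ι ι ℂ} (hρ : ρ.IsHermitian) :
    vnEntropy ρ = (ρ.charpoly.roots.map fun z ↦ Real.negMulLog z.re).sum := by
  rw [vnEntropy_eq_sum_eigenvalues hρ, hρ.roots_charpoly_eq_eigenvalues, Multiset.map_map]
  exact sum_congr rfl fun i _ ↦ by simp

lemma vnEntropy_eq_of_charpoly_eq {ρ : Matrix ι ι ℂ} {σ : Matrix κ κ ℂ} (hρ : ρ.IsHermitian)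
    (hσ : σ.IsHermitian) (h : ρ.charpoly = σ.charpoly) : vnEntropy ρ = vnEntropy σ := by
  rw [vnEntropy_eq_sum_roots_charpoly hρ, vnEntropy_eq_sum_roots_charpoly hσ, h]

lemma vnEntropy_transpose {ρ : Matrix ι ι ℂ} (hρ : ρ.IsHermitian) :
    vnEntropy ρᵀ = vnEntropy ρ :=
  vnEntropy_eq_of_charpoly_eq hρ.transpose hρ ρ.charpoly_transpose

lemma vnEntropy_reindex {ρ : Matrix ι ι ℂ} (hρ : ρ.IsHermitian) (e : ι ≃ κ) :
    vnEntropy (ρ.reindex e e) = vnEntropy ρ :=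
  vnEntropy_eq_of_charpoly_eq (hρ.submatrix e.symm) hρ (Matrix.charpoly_reindex e ρ)

lemma vnEntropy_star_mul_mul_unitary {ρ U : Matrix ι ι ℂ} (hρ : ρ.IsHermitian)
    (hU : U ∈ Matrix.unitaryGroup ι ℂ) : vnEntropy (star U * ρ * U) = vnEntropy ρ := by
  refine vnEntropy_eq_of_charpoly_eq (Matrix.isHermitian_conjTranspose_mul_mul U hρ) hρ ?_
  rw [mul_assoc, Matrix.charpoly_mul_comm, mul_assoc, Matrix.mem_unitaryGroup_iff.1 hU, mul_one]

lemma vnEntropy_mul_conjTranspose_self (M : Matrix ι κ ℂ) :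
    vnEntropy (M * Mᴴ) = vnEntropy (Mᴴ * M) := by
  rw [vnEntropy_eq_sum_roots_charpoly (Matrix.isHermitian_mul_conjTranspose_self M),
    vnEntropy_eq_sum_roots_charpoly (Matrix.isHermitian_conjTranspose_mul_self M)]
  have hne (k : ℕ) {α : Type} [Fintype α] [DecidableEq α] (N : Matrix α α ℂ) :
      (Polynomial.X ^ k * N.charpoly : Polynomial ℂ) ≠ 0 :=
    mul_ne_zero (pow_ne_zero _ Polynomial.X_ne_zero) N.charpoly_monic.ne_zero
  -- The two characteristic polynomials differ by a power of `X`, and `negMulLog 0 = 0`.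
  have hsum := congrArg (fun p ↦ (p.roots.map fun z : ℂ ↦ Real.negMulLog z.re).sum)
    (Matrix.charpoly_mul_comm' M Mᴴ)
  simpa [Polynomial.roots_mul, hne, Multiset.map_nsmul, Multiset.sum_nsmul] using hsum

lemma vnEntropy_diagonal_ofReal (d : ι → ℝ) :
    vnEntropy (Matrix.diagonal fun i ↦ (d i : ℂ)) = ∑ i, Real.negMulLog (d i) := by
  have hherm : (Matrix.diagonal fun i ↦ (d i : ℂ)).IsHermitian :=
    Matrix.isHermitian_diagonal_of_self_adjoint _ (by ext; simp)
  rw [vnEntropy_eq_sum_roots_charpoly hherm, Matrix.charpoly_diagonal,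
    Polynomial.roots_prod _ _ (by simp [prod_ne_zero_iff, Polynomial.X_sub_C_ne_zero])]
  simp [Multiset.map_map]

lemma vnEntropy_eq_sum_diag_of_isDiag {ρ : Matrix ι ι ℂ} (hρ : ρ.IsHermitian) (hd : ρ.IsDiag) :
    vnEntropy ρ = ∑ a, Real.negMulLog (ρ a a).re := by
  rw [← vnEntropy_diagonal_ofReal fun a ↦ (ρ a a).re]
  exact congrArg vnEntropy <| hd.diagonal_diag.symm.trans <|
    congrArg Matrix.diagonal <| funext fun a ↦ (hρ.coe_re_apply_self a).symm

lemma sum_normSq_unitary_row {U : Matrix ι ι ℂ} (hU : U ∈ Matrix.unitaryGroup ι ℂ) (a : ι) :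
    ∑ j, Complex.normSq (U a j) = 1 := by
  have h := congrFun₂ (Matrix.mem_unitaryGroup_iff.1 hU) a a
  simp only [Matrix.mul_apply, Matrix.star_apply, Matrix.one_apply_eq, RCLike.star_def,
    Complex.mul_conj] at h
  exact_mod_cast h

lemma sum_normSq_unitary_col {U : Matrix ι ι ℂ} (hU : U ∈ Matrix.unitaryGroup ι ℂ) (j : ι) :
    ∑ a, Complex.normSq (U a j) = 1 := by
  simpa [Complex.normSq_conj] using sum_normSq_unitary_row (Unitary.star_mem hU) j

lemma isHermitian_apply_eq_sum_eigenvalues {ρ : Matrix ι ι ℂ} (hρ : ρ.IsHermitian) (a b : ι) :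
    ρ a b = ∑ j, (hρ.eigenvectorUnitary : Matrix ι ι ℂ) a j * hρ.eigenvalues j *
      star ((hρ.eigenvectorUnitary : Matrix ι ι ℂ) b j) := by
  conv_lhs => rw [hρ.spectral_theorem, Unitary.conjStarAlgAut_apply, Matrix.mul_apply]
  simp [Matrix.mul_diagonal]

lemma re_diag_eq_sum_eigenvalues {ρ : Matrix ι ι ℂ} (hρ : ρ.IsHermitian) (a : ι) :
    (ρ a a).re = ∑ j, Complex.normSq ((hρ.eigenvectorUnitary : Matrix ι ι ℂ) a j) •
      hρ.eigenvalues j := by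
  rw [isHermitian_apply_eq_sum_eigenvalues hρ, Complex.re_sum]
  refine sum_congr rfl fun j _ ↦ ?_
  rw [mul_right_comm, RCLike.star_def, Complex.mul_conj]
  simp

lemma vnEntropy_eq_sum_sum_normSq {ρ : Matrix ι ι ℂ} (hρ : ρ.IsHermitian) :
    vnEntropy ρ = ∑ a, ∑ j, Complex.normSq ((hρ.eigenvectorUnitary : Matrix ι ι ℂ) a j) •
      Real.negMulLog (hρ.eigenvalues j) := by
  rw [sum_comm, vnEntropy_eq_sum_eigenvalues hρ]
  refine sum_congr rfl fun j _ ↦ ?_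
  rw [← sum_smul, sum_normSq_unitary_col (SetLike.coe_mem _), one_smul]

lemma sum_normSq_smul_negMulLog_le_negMulLog_diag {ρ : Matrix ι ι ℂ} (hρ : ρ.PosSemidef) (a : ι) :
    ∑ j, Complex.normSq ((hρ.isHermitian.eigenvectorUnitary : Matrix ι ι ℂ) a j) •
      Real.negMulLog (hρ.isHermitian.eigenvalues j) ≤ Real.negMulLog (ρ a a).re := by
  rw [re_diag_eq_sum_eigenvalues hρ.isHermitian]
  exact Real.concaveOn_negMulLog.le_map_sum (fun j _ ↦ Complex.normSq_nonneg _)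
    (sum_normSq_unitary_row (SetLike.coe_mem _) a) fun j _ ↦ hρ.eigenvalues_nonneg j

lemma vnEntropy_le_sum_negMulLog_diag {ρ : Matrix ι ι ℂ} (hρ : ρ.PosSemidef) :
    vnEntropy ρ ≤ ∑ a, Real.negMulLog (ρ a a).re := by
  rw [vnEntropy_eq_sum_sum_normSq hρ.isHermitian]
  exact sum_le_sum fun a _ ↦ sum_normSq_smul_negMulLog_le_negMulLog_diag hρ a

lemma isDiag_of_vnEntropy_eq_sum_negMulLog_diag {ρ : Matrix ι ι ℂ} (hρ : ρ.PosSemidef)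
    (h : vnEntropy ρ = ∑ a, Real.negMulLog (ρ a a).re) : ρ.IsDiag := by
  intro a b hab
  set U := (hρ.isHermitian.eigenvectorUnitary : Matrix ι ι ℂ) with hUdef
  have hU : U ∈ Matrix.unitaryGroup ι ℂ := SetLike.coe_mem _
  set lam := hρ.isHermitian.eigenvalues with hlam
  have jensen_eq : Real.negMulLog (∑ j, Complex.normSq (U a j) • lam j) =
      ∑ j, Complex.normSq (U a j) • Real.negMulLog (lam j) := by
    rw [vnEntropy_eq_sum_sum_normSq hρ.isHermitian,
      sum_eq_sum_iff_of_le fun a _ ↦ sum_normSq_smul_negMulLog_le_negMulLog_diag hρ a] at h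
    rw [hUdef, hlam, ← re_diag_eq_sum_eigenvalues, h a (mem_univ a)]
  have eigenvalue_eq (j : ι) (hj : U a j ≠ 0) : lam j = (ρ a a).re := by
    rw [re_diag_eq_sum_eigenvalues hρ.isHermitian]
    exact (Real.strictConcaveOn_negMulLog.map_sum_eq_iff' (fun j _ ↦ Complex.normSq_nonneg _)
      (sum_normSq_unitary_row hU a) fun j _ ↦ hρ.eigenvalues_nonneg j).1 jensen_eq j (mem_univ j)
      (by simpa using hj)
  calc ρ a b = ∑ j, U a j * lam j * star (U b j) :=
        isHermitian_apply_eq_sum_eigenvalues hρ.isHermitian a b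
    _ = ∑ j, (ρ a a).re * (U a j * star (U b j)) := by
        refine sum_congr rfl fun j _ ↦ ?_
        by_cases hj : U a j = 0
        · simp [hj]
        · rw [eigenvalue_eq j hj]; ring
    _ = (ρ a a).re * (U * star U) a b := by
        rw [← mul_sum]; rfl
    _ = 0 := by rw [Matrix.mem_unitaryGroup_iff.1 hU, Matrix.one_apply_ne hab, mul_zero]

lemma isDiag_star_eigenvectorUnitary_mul_mul {σ : Matrix ι ι ℂ} (hσ : σ.IsHermitian) :
    (star (hσ.eigenvectorUnitary : Matrix ι ι ℂ) * σ * hσ.eigenvectorUnitary).IsDiag := by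
  have h := hσ.conjStarAlgAut_star_eigenvectorUnitary
  rw [Unitary.conjStarAlgAut_star_apply] at h
  exact h ▸ Matrix.isDiag_diagonal _

end VonNeumannEntropy

section UniformJensen

variable {κ : Type*} [Fintype κ] [Nonempty κ]

lemma card_mul_negMulLog_sum_inv_card_smul (p : κ → ℝ) :
    Fintype.card κ * Real.negMulLog (∑ s, (Fintype.card κ : ℝ)⁻¹ • p s) =
      Real.negMulLog (∑ s, p s) + (∑ s, p s) * Real.log (Fintype.card κ) := by
  have hd : (Fintype.card κ : ℝ) ≠ 0 := by simp
  rw [← smul_sum, smul_eq_mul, Real.negMulLog_mul, Real.negMulLog, Real.log_inv]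
  field_simp
  ring

lemma sum_negMulLog_le_add_mul_log_card {p : κ → ℝ} (hp : ∀ s, 0 ≤ p s) :
    ∑ s, Real.negMulLog (p s) ≤
      Real.negMulLog (∑ s, p s) + (∑ s, p s) * Real.log (Fintype.card κ) := by
  have hd : (0 : ℝ) < Fintype.card κ := by simp [Fintype.card_pos]
  have jensen := Real.concaveOn_negMulLog.le_map_sum (t := univ) (p := p)
    (w := fun _ ↦ (Fintype.card κ : ℝ)⁻¹) (fun _ _ ↦ by positivity) (by simp) fun s _ ↦ hp s
  rwa [← smul_sum, smul_eq_mul, inv_mul_le_iff₀ hd, card_mul_negMulLog_sum_inv_card_smul] at jensen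

lemma eq_sum_div_card_of_sum_negMulLog_eq {p : κ → ℝ} (hp : ∀ s, 0 ≤ p s)
    (h : ∑ s, Real.negMulLog (p s) =
      Real.negMulLog (∑ s, p s) + (∑ s, p s) * Real.log (Fintype.card κ)) (s : κ) :
    p s = (∑ t, p t) / Fintype.card κ := by
  have hd : (0 : ℝ) < Fintype.card κ := by simp [Fintype.card_pos]
  rw [← card_mul_negMulLog_sum_inv_card_smul, ← inv_mul_eq_iff_eq_mul₀ hd.ne', ← smul_eq_mul,
    smul_sum, eq_comm] at h
  have jensen := (Real.strictConcaveOn_negMulLog.map_sum_eq_iff (fun _ _ ↦ by positivity)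
    (by simp) fun t _ ↦ hp t).1 h
  rw [jensen s (mem_univ s), ← smul_sum, smul_eq_mul, inv_mul_eq_div]

end UniformJensen

section PartialTrace

open scoped ComplexOrder Kronecker Matrix

lemma re_diag_nonneg {ι : Type*} {ρ : Matrix ι ι ℂ} (hρ : ρ.PosSemidef) (a : ι) :
    0 ≤ (ρ a a).re :=
  (Complex.nonneg_iff.1 hρ.diag_nonneg).1

variable {ι κ : Type} [Fintype κ]

/-- The partial trace over the second tensor factor `κ`. -/
def partialTrace (ρ : Matrix (ι × κ) (ι × κ) ℂ) : Matrix ι ι ℂ :=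
  .of fun a b ↦ ∑ s, ρ (a, s) (b, s)

lemma partialTrace_isHermitian {ρ : Matrix (ι × κ) (ι × κ) ℂ} (hρ : ρ.IsHermitian) :
    (partialTrace ρ).IsHermitian := by
  ext a b
  simp [partialTrace, ← hρ.apply (b, _) (a, _)]

lemma re_partialTrace_diag (ρ : Matrix (ι × κ) (ι × κ) ℂ) (a : ι) :
    (partialTrace ρ a a).re = ∑ s, (ρ (a, s) (a, s)).re :=
  Complex.re_sum _ _

variable [Fintype ι]

lemma trace_partialTrace (ρ : Matrix (ι × κ) (ι × κ) ℂ) : (partialTrace ρ).trace = ρ.trace :=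
  (Fintype.sum_prod_type fun x ↦ ρ x x).symm

section Kronecker

variable [DecidableEq κ]

lemma kronecker_one_mul_apply (M : Matrix ι ι ℂ) (ρ : Matrix (ι × κ) (ι × κ) ℂ) (a : ι) (s : κ)
    (y : ι × κ) : ((M ⊗ₖ (1 : Matrix κ κ ℂ)) * ρ) (a, s) y = ∑ b, M a b * ρ (b, s) y := by
  simp [Matrix.mul_apply, Fintype.sum_prod_type, Matrix.one_apply]

lemma mul_kronecker_one_apply (M : Matrix ι ι ℂ) (ρ : Matrix (ι × κ) (ι × κ) ℂ) (x : ι × κ)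
    (b : ι) (t : κ) : (ρ * (M ⊗ₖ (1 : Matrix κ κ ℂ))) x (b, t) = ∑ a, ρ x (a, t) * M a b := by
  simp [Matrix.mul_apply, Fintype.sum_prod_type, Matrix.one_apply]

lemma partialTrace_kronecker_one_mul (M : Matrix ι ι ℂ) (ρ : Matrix (ι × κ) (ι × κ) ℂ) :
    partialTrace ((M ⊗ₖ (1 : Matrix κ κ ℂ)) * ρ) = M * partialTrace ρ := by
  ext a b
  simp only [partialTrace, Matrix.of_apply, kronecker_one_mul_apply]
  simp only [Matrix.mul_apply, Matrix.of_apply, mul_sum]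
  exact sum_comm

lemma partialTrace_mul_kronecker_one (M : Matrix ι ι ℂ) (ρ : Matrix (ι × κ) (ι × κ) ℂ) :
    partialTrace (ρ * (M ⊗ₖ (1 : Matrix κ κ ℂ))) = partialTrace ρ * M := by
  ext a b
  simp only [partialTrace, Matrix.of_apply, mul_kronecker_one_apply]
  simp only [Matrix.mul_apply, Matrix.of_apply, sum_mul]
  exact sum_comm

/-- The density matrix `ρ` after the change of basis `U` of the first tensor factor; a suitable `U`
diagonalizes the partial trace. -/
def conjFst (U : Matrix ι ι ℂ) (ρ : Matrix (ι × κ) (ι × κ) ℂ) : Matrix (ι × κ) (ι × κ) ℂ :=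
  star (U ⊗ₖ (1 : Matrix κ κ ℂ)) * ρ * (U ⊗ₖ (1 : Matrix κ κ ℂ))

lemma partialTrace_conjFst (U : Matrix ι ι ℂ) (ρ : Matrix (ι × κ) (ι × κ) ℂ) :
    partialTrace (conjFst U ρ) = star U * partialTrace ρ * U := by
  rw [conjFst, partialTrace_mul_kronecker_one, Matrix.star_eq_conjTranspose,
    Matrix.conjTranspose_kronecker, Matrix.conjTranspose_one, partialTrace_kronecker_one_mul,
    Matrix.star_eq_conjTranspose]

lemma conjFst_kronecker (U σ : Matrix ι ι ℂ) (τ : Matrix κ κ ℂ) :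
    conjFst U (σ ⊗ₖ τ) = (star U * σ * U) ⊗ₖ τ := by
  simp [conjFst, Matrix.star_eq_conjTranspose, Matrix.conjTranspose_kronecker,
    ← Matrix.mul_kronecker_mul]

lemma conjFst_posSemidef (U : Matrix ι ι ℂ) {ρ : Matrix (ι × κ) (ι × κ) ℂ} (hρ : ρ.PosSemidef) :
    (conjFst U ρ).PosSemidef :=
  hρ.conjTranspose_mul_mul_same _

variable [DecidableEq ι] {U : Matrix ι ι ℂ}

lemma vnEntropy_conjFst (hU : U ∈ Matrix.unitaryGroup ι ℂ) {ρ : Matrix (ι × κ) (ι × κ) ℂ}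
    (hρ : ρ.IsHermitian) : vnEntropy (conjFst U ρ) = vnEntropy ρ :=
  vnEntropy_star_mul_mul_unitary hρ (Matrix.kronecker_mem_unitary hU (one_mem _))

lemma vnEntropy_partialTrace_conjFst (hU : U ∈ Matrix.unitaryGroup ι ℂ)
    {ρ : Matrix (ι × κ) (ι × κ) ℂ} (hρ : ρ.IsHermitian) :
    vnEntropy (partialTrace (conjFst U ρ)) = vnEntropy (partialTrace ρ) := by
  rw [partialTrace_conjFst, vnEntropy_star_mul_mul_unitary (partialTrace_isHermitian hρ) hU]

lemma trace_conjFst (hU : U ∈ Matrix.unitaryGroup ι ℂ) (ρ : Matrix (ι × κ) (ι × κ) ℂ) :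
    (conjFst U ρ).trace = ρ.trace := by
  rw [conjFst, Matrix.trace_mul_cycle,
    Matrix.mem_unitaryGroup_iff.1 (Matrix.kronecker_mem_unitary hU (one_mem _)), one_mul]

lemma conjFst_injective (hU : U ∈ Matrix.unitaryGroup ι ℂ) :
    Function.Injective (conjFst (κ := κ) U) := by
  intro ρ σ h
  have hV := Matrix.kronecker_mem_unitary hU (one_mem (Matrix.unitaryGroup κ ℂ))
  exact (Unitary.isUnit_coe (U := ⟨_, Unitary.star_mem hV⟩)).mul_left_cancel
    ((Unitary.isUnit_coe (U := ⟨_, hV⟩)).mul_right_cancel h)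

lemma exists_unitary_isDiag_partialTrace_conjFst {ρ : Matrix (ι × κ) (ι × κ) ℂ}
    (hρ : ρ.IsHermitian) :
    ∃ U ∈ Matrix.unitaryGroup ι ℂ, (partialTrace (conjFst U ρ)).IsDiag :=
  ⟨_, SetLike.coe_mem (partialTrace_isHermitian hρ).eigenvectorUnitary, by
    rw [partialTrace_conjFst]; exact isDiag_star_eigenvectorUnitary_mul_mul _⟩

end Kronecker

variable {ρ : Matrix (ι × κ) (ι × κ) ℂ}

lemma sum_negMulLog_diag_add_log_card (htr : ρ.trace = 1) :
    ∑ a, Real.negMulLog (partialTrace ρ a a).re + Real.log (Fintype.card κ) =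
      ∑ a, (Real.negMulLog (∑ s, (ρ (a, s) (a, s)).re) +
        (∑ s, (ρ (a, s) (a, s)).re) * Real.log (Fintype.card κ)) := by
  have htr' : ∑ a, (partialTrace ρ a a).re = 1 := by
    rw [← Complex.re_sum, ← Complex.one_re, ← htr, ← trace_partialTrace]; rfl
  simp_rw [← re_partialTrace_diag, sum_add_distrib, ← sum_mul, htr', one_mul]

variable [Nonempty κ]

lemma sum_negMulLog_diag_le_partialTrace (hρ : ρ.PosSemidef) (htr : ρ.trace = 1) :
    ∑ x, Real.negMulLog (ρ x x).re ≤
      ∑ a, Real.negMulLog (partialTrace ρ a a).re + Real.log (Fintype.card κ) := by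
  rw [sum_negMulLog_diag_add_log_card htr, Fintype.sum_prod_type]
  exact sum_le_sum fun a _ ↦ sum_negMulLog_le_add_mul_log_card fun s ↦ re_diag_nonneg hρ (a, s)

lemma re_diag_eq_partialTrace_div_card (hρ : ρ.PosSemidef) (htr : ρ.trace = 1)
    (h : ∑ x, Real.negMulLog (ρ x x).re =
      ∑ a, Real.negMulLog (partialTrace ρ a a).re + Real.log (Fintype.card κ)) (a : ι) (s : κ) :
    (ρ (a, s) (a, s)).re = (partialTrace ρ a a).re / Fintype.card κ := by
  rw [sum_negMulLog_diag_add_log_card htr, Fintype.sum_prod_type, sum_eq_sum_iff_of_le fun a _ ↦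
    sum_negMulLog_le_add_mul_log_card fun s ↦ re_diag_nonneg hρ (a, s)] at h
  rw [re_partialTrace_diag]
  exact eq_sum_div_card_of_sum_negMulLog_eq (fun t ↦ re_diag_nonneg hρ (a, t)) (h a (mem_univ a)) s

variable [DecidableEq ι] [DecidableEq κ]

lemma vnEntropy_le_of_isDiag_partialTrace (hρ : ρ.PosSemidef) (htr : ρ.trace = 1)
    (hd : (partialTrace ρ).IsDiag) :
    vnEntropy ρ ≤ vnEntropy (partialTrace ρ) + Real.log (Fintype.card κ) := by
  rw [vnEntropy_eq_sum_diag_of_isDiag (partialTrace_isHermitian hρ.isHermitian) hd]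
  exact (vnEntropy_le_sum_negMulLog_diag hρ).trans (sum_negMulLog_diag_le_partialTrace hρ htr)

lemma eq_kronecker_of_isDiag_partialTrace (hρ : ρ.PosSemidef) (htr : ρ.trace = 1)
    (hd : (partialTrace ρ).IsDiag)
    (h : vnEntropy ρ = vnEntropy (partialTrace ρ) + Real.log (Fintype.card κ)) :
    ρ = partialTrace ρ ⊗ₖ ((Fintype.card κ : ℂ)⁻¹ • (1 : Matrix κ κ ℂ)) := by
  have hσ := partialTrace_isHermitian hρ.isHermitian
  rw [vnEntropy_eq_sum_diag_of_isDiag hσ hd] at h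
  have hle₁ := vnEntropy_le_sum_negMulLog_diag hρ
  have hle₂ := sum_negMulLog_diag_le_partialTrace hρ htr
  have hdiag : ρ.IsDiag := isDiag_of_vnEntropy_eq_sum_negMulLog_diag hρ (by linarith)
  have hkron := hd.kronecker (Matrix.isDiag_smul_one κ (Fintype.card κ : ℂ)⁻¹)
  ext ⟨a, s⟩ y
  obtain rfl | hne := eq_or_ne (a, s) y
  · calc ρ (a, s) (a, s) = ((ρ (a, s) (a, s)).re : ℂ) :=
          (hρ.isHermitian.coe_re_apply_self (a, s)).symm
      _ = (partialTrace ρ a a).re / Fintype.card κ := by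
          rw [re_diag_eq_partialTrace_div_card hρ htr (by linarith) a s]; simp
      _ = partialTrace ρ a a / Fintype.card κ := by
          rw [← hσ.coe_re_apply_self a]; simp
      _ = _ := by simp [div_eq_mul_inv]
  · rw [hdiag hne, hkron hne]

theorem vnEntropy_le_partialTrace_add_log_card (hρ : ρ.PosSemidef) (htr : ρ.trace = 1) :
    vnEntropy ρ ≤ vnEntropy (partialTrace ρ) + Real.log (Fintype.card κ) := by
  obtain ⟨U, hU, hdiag⟩ := exists_unitary_isDiag_partialTrace_conjFst hρ.isHermitian
  have h := vnEntropy_le_of_isDiag_partialTrace (conjFst_posSemidef U hρ)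
    ((trace_conjFst hU ρ).trans htr) hdiag
  rwa [vnEntropy_conjFst hU hρ.isHermitian, vnEntropy_partialTrace_conjFst hU hρ.isHermitian] at h

theorem eq_kronecker_of_vnEntropy_eq (hρ : ρ.PosSemidef) (htr : ρ.trace = 1)
    (h : vnEntropy ρ = vnEntropy (partialTrace ρ) + Real.log (Fintype.card κ)) :
    ρ = partialTrace ρ ⊗ₖ ((Fintype.card κ : ℂ)⁻¹ • (1 : Matrix κ κ ℂ)) := by
  obtain ⟨U, hU, hdiag⟩ := exists_unitary_isDiag_partialTrace_conjFst hρ.isHermitian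
  rw [← vnEntropy_conjFst hU hρ.isHermitian,
    ← vnEntropy_partialTrace_conjFst hU hρ.isHermitian] at h
  refine conjFst_injective hU ?_
  rw [conjFst_kronecker, ← partialTrace_conjFst]
  exact eq_kronecker_of_isDiag_partialTrace (conjFst_posSemidef U hρ)
    ((trace_conjFst hU ρ).trans htr) hdiag h

end PartialTrace

section QubitStates

open scoped ComplexOrder Matrix

variable {m : ℕ} {ψ : (Fin m → Fin 2) → ℂ} {A B : Finset (Fin m)} {k : Fin m}

lemma restrict_eq_restrict_iff {x y : Fin m → Fin 2} :
    A.restrict x = A.restrict y ↔ ∀ i ∈ A, x i = y i := by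
  simp [funext_iff]

lemma restrict_insert_eq_iff {x y : Fin m → Fin 2} :
    (insert k A).restrict x = (insert k A).restrict y ↔
      x k = y k ∧ A.restrict x = A.restrict y := by
  simp [restrict_eq_restrict_iff]

lemma restrict_update_of_notMem (hk : k ∉ A) (x : Fin m → Fin 2) (s : Fin 2) :
    A.restrict (Function.update x k s) = A.restrict x :=
  restrict_eq_restrict_iff.2 fun _ hi ↦ Function.update_of_ne (ne_of_mem_of_not_mem hi hk) _ _

lemma surjective_restrict_bits (A : Finset (Fin m)) :
    Function.Surjective (A.restrict : (Fin m → Fin 2) → A → Fin 2) :=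
  Subtype.surjective_restrict (β := fun _ ↦ Fin 2) _

/-- `glue` as an equivalence; its inverse restricts a bit string to `A` and to `Aᶜ`. -/
def glueEquiv (A : Finset (Fin m)) : (A → Fin 2) × (↥Aᶜ → Fin 2) ≃ (Fin m → Fin 2) where
  toFun p := glue A p.1 p.2
  invFun z := (A.restrict z, Aᶜ.restrict z)
  left_inv p := by
    ext ⟨i, hi⟩
    · simp [glue, hi]
    · simp [glue, mem_compl.1 hi]
  right_inv z := by ext i; simp [glue]

/-- Splits off the bit at position `k` from a bit string indexed by `insert k A`. -/
def insertBitsEquiv (hk : k ∉ A) : (↥(insert k A) → Fin 2) ≃ (A → Fin 2) × Fin 2 where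
  toFun f := (fun i ↦ f ⟨i, mem_insert_of_mem i.2⟩, f ⟨k, mem_insert_self k A⟩)
  invFun p i := if h : ↑i = k then p.2 else p.1 ⟨i, mem_of_mem_insert_of_ne i.2 h⟩
  left_inv f := by ext i; grind
  right_inv p := by ext i <;> grind

lemma insertBitsEquiv_symm_restrict (hk : k ∉ A) (x : Fin m → Fin 2) (s : Fin 2) :
    (insertBitsEquiv hk).symm (A.restrict x, s) =
      (insert k A).restrict (Function.update x k s) := by
  rw [Equiv.symm_apply_eq, ← restrict_update_of_notMem hk x s]
  exact Prod.ext rfl (Function.update_self k s x).symm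

lemma reducedDensity_eq_mul_conjTranspose (ψ : (Fin m → Fin 2) → ℂ) (A : Finset (Fin m)) :
    reducedDensity ψ A =
      (Matrix.of fun u w ↦ ψ (glue A u w)) * (Matrix.of fun u w ↦ ψ (glue A u w))ᴴ := by
  ext u v
  simp [reducedDensity, Matrix.mul_apply]

lemma posSemidef_reducedDensity (ψ : (Fin m → Fin 2) → ℂ) (A : Finset (Fin m)) :
    (reducedDensity ψ A).PosSemidef := by
  rw [reducedDensity_eq_mul_conjTranspose]
  exact Matrix.posSemidef_self_mul_conjTranspose _

lemma trace_reducedDensity (hψ : ∑ x, ‖ψ x‖ ^ 2 = 1) (A : Finset (Fin m)) :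
    (reducedDensity ψ A).trace = 1 := by
  calc (reducedDensity ψ A).trace
      = ∑ p : (A → Fin 2) × (↥Aᶜ → Fin 2), ((‖ψ (glueEquiv A p)‖ ^ 2 : ℝ) : ℂ) := by
        simp [Matrix.trace, reducedDensity, Fintype.sum_prod_type, Complex.mul_conj', glueEquiv]
    _ = ((∑ z, ‖ψ z‖ ^ 2 : ℝ) : ℂ) := by
        rw [(glueEquiv A).sum_comp fun z ↦ ((‖ψ z‖ ^ 2 : ℝ) : ℂ), Complex.ofReal_sum]
    _ = 1 := by rw [hψ, Complex.ofReal_one]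

/-- Entries of the reduced density matrix on `A`, indexed by bit strings on all `m` positions
so that reductions to different sets can be compared; only the bits in `A` matter. -/
def densityEntry (ψ : (Fin m → Fin 2) → ℂ) (A : Finset (Fin m)) (x y : Fin m → Fin 2) : ℂ :=
  reducedDensity ψ A (A.restrict x) (A.restrict y)

lemma densityEntry_eq_sum (ψ : (Fin m → Fin 2) → ℂ) (A : Finset (Fin m)) (x y : Fin m → Fin 2) :
    densityEntry ψ A x y = ∑ z, if A.restrict z = A.restrict x then
      ψ z * starRingEnd ℂ (ψ (A.piecewise y z)) else 0 := by
  have hres (u : A → Fin 2) (w : ↥Aᶜ → Fin 2) : A.restrict (glue A u w) = u :=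
    congrArg Prod.fst ((glueEquiv A).left_inv (u, w))
  have hpiece (u : A → Fin 2) (w : ↥Aᶜ → Fin 2) :
      A.piecewise y (glue A u w) = glue A (A.restrict y) w := by
    ext i
    by_cases hi : i ∈ A <;> simp [glue, hi]
  rw [← (glueEquiv A).sum_comp, Fintype.sum_prod_type]
  simp [glueEquiv, hres, hpiece, densityEntry, reducedDensity]

lemma densityEntry_eq_sum_insert (hk : k ∉ A) (x y : Fin m → Fin 2) :
    densityEntry ψ A x y = ∑ s,
      densityEntry ψ (insert k A) (Function.update x k s) (Function.update y k s) := by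
  have hpiece (z : Fin m → Fin 2) :
      (insert k A).piecewise (Function.update y k (z k)) z = A.piecewise y z := by
    ext i
    by_cases hi : i = k <;> simp_all [piecewise]
  simp_rw [densityEntry_eq_sum, restrict_insert_eq_iff, restrict_update_of_notMem hk]
  rw [sum_comm]
  simp [ite_and, hpiece]

lemma maximallyMixed_iff_densityEntry :
    MaximallyMixed ψ A ↔ ∀ x y, densityEntry ψ A x y =
      if A.restrict x = A.restrict y then ((2 : ℂ) ^ #A)⁻¹ else 0 := by
  simp only [densityEntry, ← (surjective_restrict_bits A).forall₂ (p := fun u v ↦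
    reducedDensity ψ A u v = if u = v then ((2 : ℂ) ^ #A)⁻¹ else 0)]
  simp [MaximallyMixed, ← Matrix.ext_iff, Matrix.one_apply]

lemma maximallyMixed_empty (hψ : ∑ x, ‖ψ x‖ ^ 2 = 1) : MaximallyMixed ψ ∅ := by
  ext u v
  obtain rfl : u = v := Subsingleton.elim u v
  have htr := trace_reducedDensity hψ ∅
  rw [Matrix.trace, Fintype.sum_subsingleton _ u, Matrix.diag_apply] at htr
  simp [htr]

/-- Qubit `k` is maximally mixed and uncorrelated with the qubits in `B`, that is,
`ρ_{B ∪ {k}} = ρ_B ⊗ I/2`. -/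
def IsDecoupled (ψ : (Fin m → Fin 2) → ℂ) (B : Finset (Fin m)) (k : Fin m) : Prop :=
  ∀ x y, densityEntry ψ (insert k B) x y = if x k = y k then densityEntry ψ B x y / 2 else 0

lemma IsDecoupled.of_insert {j : Fin m} (hjk : j ≠ k) (h : IsDecoupled ψ (insert j B) k) :
    IsDecoupled ψ B k := by
  by_cases hj : j ∈ B
  · rwa [insert_eq_of_mem hj] at h
  intro x y
  rw [densityEntry_eq_sum_insert (k := j) (by simp [hj, hjk]), densityEntry_eq_sum_insert hj,
    insert_comm]
  simp_rw [h _ _, Function.update_of_ne hjk.symm]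
  split_ifs
  · rw [sum_div]
  · exact sum_const_zero

lemma IsDecoupled.mono (hk : k ∉ B) (hAB : A ⊆ B) (h : IsDecoupled ψ B k) :
    IsDecoupled ψ A k := by
  suffices ∀ D : Finset (Fin m), k ∉ D → IsDecoupled ψ (D ∪ A) k → IsDecoupled ψ A k from
    this B hk (by rwa [union_eq_left.2 hAB])
  intro D hkD hD
  induction D using Finset.induction_on with
  | empty => simpa using hD
  | insert j D _ ih =>
    rw [mem_insert, not_or] at hkD
    exact ih hkD.2 (.of_insert (Ne.symm hkD.1) (insert_union j D A ▸ hD))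

lemma MaximallyMixed.insert (hk : k ∉ B) (hB : MaximallyMixed ψ B) (h : IsDecoupled ψ B k) :
    MaximallyMixed ψ (insert k B) := by
  rw [maximallyMixed_iff_densityEntry] at *
  intro x y
  rw [h, hB, card_insert_of_notMem hk, pow_succ, mul_inv]
  simp only [restrict_insert_eq_iff, ite_and, div_eq_mul_inv, ite_mul, zero_mul]

/-- The reduced density matrix on `A ∪ {k}`, with rows and columns indexed by pairs of a bit
string on `A` and a bit at `k`. -/
def splitDensity (ψ : (Fin m → Fin 2) → ℂ) (hk : k ∉ A) :
    Matrix ((A → Fin 2) × Fin 2) ((A → Fin 2) × Fin 2) ℂ :=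
  (reducedDensity ψ (insert k A)).reindex (insertBitsEquiv hk) (insertBitsEquiv hk)

lemma posSemidef_splitDensity (ψ : (Fin m → Fin 2) → ℂ) (hk : k ∉ A) :
    (splitDensity ψ hk).PosSemidef :=
  (posSemidef_reducedDensity ψ (insert k A)).submatrix _

lemma vnEntropy_splitDensity (ψ : (Fin m → Fin 2) → ℂ) (hk : k ∉ A) :
    vnEntropy (splitDensity ψ hk) = Sent ψ (insert k A) :=
  vnEntropy_reindex (posSemidef_reducedDensity ψ (insert k A)).isHermitian _

lemma splitDensity_restrict (hk : k ∉ A) (x y : Fin m → Fin 2) (s t : Fin 2) :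
    splitDensity ψ hk (A.restrict x, s) (A.restrict y, t) =
      densityEntry ψ (insert k A) (Function.update x k s) (Function.update y k t) := by
  rw [splitDensity, Matrix.reindex_apply, Matrix.submatrix_apply, insertBitsEquiv_symm_restrict,
    insertBitsEquiv_symm_restrict, densityEntry]

lemma partialTrace_splitDensity (hk : k ∉ A) :
    partialTrace (splitDensity ψ hk) = reducedDensity ψ A := by
  ext u v
  obtain ⟨x, rfl⟩ := surjective_restrict_bits A u
  obtain ⟨y, rfl⟩ := surjective_restrict_bits A v
  simp only [partialTrace, Matrix.of_apply, splitDensity_restrict]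
  exact (densityEntry_eq_sum_insert hk x y).symm

lemma trace_splitDensity (hψ : ∑ x, ‖ψ x‖ ^ 2 = 1) (hk : k ∉ A) :
    (splitDensity ψ hk).trace = 1 := by
  rw [← trace_partialTrace, partialTrace_splitDensity, trace_reducedDensity hψ]

lemma Sent_insert_le (hψ : ∑ x, ‖ψ x‖ ^ 2 = 1) (hk : k ∉ A) :
    Sent ψ (insert k A) ≤ Sent ψ A + Real.log 2 := by
  simpa [vnEntropy_splitDensity, partialTrace_splitDensity, Sent] using
    vnEntropy_le_partialTrace_add_log_card (posSemidef_splitDensity ψ hk)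
      (trace_splitDensity hψ hk)

lemma isDecoupled_of_Sent_insert_eq (hψ : ∑ x, ‖ψ x‖ ^ 2 = 1) (hk : k ∉ A)
    (h : Sent ψ (insert k A) = Sent ψ A + Real.log 2) : IsDecoupled ψ A k := by
  have hprod := eq_kronecker_of_vnEntropy_eq (posSemidef_splitDensity ψ hk)
    (trace_splitDensity hψ hk) (by
      simpa [vnEntropy_splitDensity, partialTrace_splitDensity, Sent] using h)
  intro x y
  have hxy := congrFun₂ hprod (A.restrict x, x k) (A.restrict y, y k)
  rw [splitDensity_restrict, partialTrace_splitDensity, Function.update_eq_self,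
    Function.update_eq_self] at hxy
  simpa [Matrix.one_apply, densityEntry, div_eq_mul_inv] using hxy

lemma reducedDensity_compl (ψ : (Fin m → Fin 2) → ℂ) (A : Finset (Fin m)) :
    reducedDensity ψ Aᶜ =
      ((Matrix.of fun u w ↦ ψ (glue A u w))ᴴ * Matrix.of fun u w ↦ ψ (glue A u w))ᵀ := by
  ext u v
  let e : (↥Aᶜᶜ → Fin 2) ≃ (A → Fin 2) :=
    (Equiv.subtypeEquivRight fun i ↦ by rw [compl_compl]).arrowCongr (.refl _)
  have hglue (w : ↥Aᶜ → Fin 2) (u' : ↥Aᶜᶜ → Fin 2) : glue Aᶜ w u' = glue A (e u') w := by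
    ext i
    by_cases hi : i ∈ A
    · simp only [glue, hi, mem_compl, not_true_eq_false, dite_false, dite_true]
      rfl
    · simp [glue, hi]
  simp only [reducedDensity, hglue, Matrix.transpose_apply, Matrix.mul_apply]
  rw [e.sum_comp fun u' ↦ ψ (glue A u' u) * starRingEnd ℂ (ψ (glue A u' v))]
  simp [mul_comm]

lemma Sent_compl (ψ : (Fin m → Fin 2) → ℂ) (A : Finset (Fin m)) : Sent ψ Aᶜ = Sent ψ A := by
  rw [Sent, Sent, reducedDensity_compl, vnEntropy_transpose
    (Matrix.isHermitian_conjTranspose_mul_self _), ← vnEntropy_mul_conjTranspose_self,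
    reducedDensity_eq_mul_conjTranspose]

lemma MaximallyMixed.Sent_eq (h : MaximallyMixed ψ A) : Sent ψ A = #A * Real.log 2 := by
  have hdiag : reducedDensity ψ A =
      Matrix.diagonal fun _ ↦ ((((2 : ℝ) ^ #A)⁻¹ : ℝ) : ℂ) := by
    rw [h, Matrix.smul_one_eq_diagonal]
    simp
  rw [Sent, hdiag, vnEntropy_diagonal_ofReal]
  simp [Real.negMulLog]

lemma Sent_le_insert_add (hψ : ∑ x, ‖ψ x‖ ^ 2 = 1) (hk : k ∉ A) :
    Sent ψ A ≤ Sent ψ (insert k A) + Real.log 2 := by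
  have h := Sent_insert_le (A := (insert k A)ᶜ) hψ (k := k) (by simp)
  rwa [compl_insert, insert_erase (mem_compl.2 hk), Sent_compl, ← compl_insert, Sent_compl] at h

lemma Sent_le_card_mul_log_two (hψ : ∑ x, ‖ψ x‖ ^ 2 = 1) (A : Finset (Fin m)) :
    Sent ψ A ≤ #A * Real.log 2 := by
  induction A using Finset.induction_on with
  | empty => exact (maximallyMixed_empty hψ).Sent_eq.le
  | insert k A hk ih =>
    rw [card_insert_of_notMem hk]
    push_cast
    linarith [Sent_insert_le hψ hk]

end QubitStates

section AccessStructures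

variable {n k : ℕ} {Γ : Finset (Fin n) → Prop} {A B M T : Finset (Fin n)} {i x : Fin n}

lemma exists_isMinimal_subset (hA : Γ A) : ∃ M ⊆ A, IsMinimal Γ M := by
  obtain ⟨M, hMA, hM⟩ := exists_minimal_le_of_wellFoundedLT Γ A hA
  exact ⟨M, hMA, hM.prop, fun B hBM hB ↦ hM.not_lt hB hBM⟩

lemma not_authorized_of_card_lt (hhom : ∀ A, IsMinimal Γ A → #A = k) (hA : #A < k) : ¬ Γ A := by
  intro hΓ
  obtain ⟨M, hMA, hM⟩ := exists_isMinimal_subset hΓ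
  exact hA.not_ge (hhom M hM ▸ card_le_card hMA)

lemma isMinimal_of_card_eq (hhom : ∀ A, IsMinimal Γ A → #A = k) (hA : Γ A) (hcard : #A = k) :
    IsMinimal Γ A :=
  ⟨hA, fun _ hB ↦ not_authorized_of_card_lt hhom (hcard ▸ card_lt_card hB)⟩

lemma authorized_compl (hnc : NoCloning Γ) (hA : ¬ Γ A) : Γ Aᶜ :=
  not_imp_comm.1 (hnc A).2 hA

lemma not_disjoint_of_authorized (hmono : Monotonic Γ) (hnc : NoCloning Γ) (hA : Γ A)
    (hB : Γ B) : ¬ Disjoint A B :=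
  fun h ↦ (hnc A).1 hA (hmono B _ hB (subset_compl_iff_disjoint_left.2 h))

/-- Player `i` is pivotal for `B`: joining `i` turns the unauthorized set `B` into an authorized
one. -/
def IsPivotal (Γ : Finset (Fin n) → Prop) (i : Fin n) (B : Finset (Fin n)) : Prop :=
  i ∉ B ∧ ¬ Γ B ∧ Γ (insert i B)

lemma IsMinimal.isPivotal_erase (hM : IsMinimal Γ M) (hi : i ∈ M) : IsPivotal Γ i (M.erase i) :=
  ⟨notMem_erase i M, hM.2 _ (erase_ssubset hi), (insert_erase hi).symm ▸ hM.1⟩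

lemma IsMinimal.isPivotal_compl (hnc : NoCloning Γ) (hM : IsMinimal Γ M) (hi : i ∈ M) :
    IsPivotal Γ i Mᶜ :=
  ⟨by simpa, (hnc M).1 hM.1,
    compl_erase (s := M) ▸ authorized_compl hnc (hM.2 _ (erase_ssubset hi))⟩

/-- Some member of `T` is pivotal for a set containing the rest of `T`. In a QSS state the qubit of
that member is decoupled from the rest of `T`. -/
def HasPivot (Γ : Finset (Fin n) → Prop) (T : Finset (Fin n)) : Prop :=
  ∃ i ∈ T, ∃ B, T.erase i ⊆ B ∧ IsPivotal Γ i B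

lemma IsMinimal.hasPivot_of_subset (hM : IsMinimal Γ M) (hT : T.Nonempty) (hTM : T ⊆ M) :
    HasPivot Γ T :=
  have ⟨i, hi⟩ := hT
  ⟨i, hi, M.erase i, erase_subset_erase i hTM, hM.isPivotal_erase (hTM hi)⟩

lemma IsMinimal.hasPivot_of_inter_eq_singleton (hnc : NoCloning Γ) (hM : IsMinimal Γ M)
    (h : M ∩ T = {i}) : HasPivot Γ T := by
  obtain ⟨hiM, hiT⟩ := mem_inter.1 (h ▸ mem_singleton_self i)
  refine ⟨i, hiT, Mᶜ, ?_, hM.isPivotal_compl hnc hiM⟩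
  rw [subset_compl_iff_disjoint_left, disjoint_iff_inter_eq_empty, inter_erase, h,
    erase_singleton]

lemma hasPivot_of_card_le_two (hnc : NoCloning Γ) (hnr : NoRedundancy Γ) (hT : T.Nonempty)
    (hcard : #T ≤ 2) : HasPivot Γ T := by
  obtain ⟨i, hiT⟩ := hT
  obtain ⟨M, hM, hiM⟩ := hnr i
  have hpos : 0 < #(M ∩ T) := card_pos.2 ⟨i, mem_inter.2 ⟨hiM, hiT⟩⟩
  obtain hone | htwo : #(M ∩ T) = 1 ∨ #T ≤ #(M ∩ T) := by omega
  · obtain ⟨j, hj⟩ := card_eq_one.1 hone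
    exact hM.hasPivot_of_inter_eq_singleton hnc hj
  · exact hM.hasPivot_of_subset ⟨i, hiT⟩
      (inter_eq_right.1 (eq_of_subset_of_card_le inter_subset_right htwo))

open Classical in
/-- The players that turn `T` into an authorized set. For a triple `T` without a pivot these turn
out to be exactly the players outside `T`. -/
noncomputable def completers (Γ : Finset (Fin n) → Prop) (T : Finset (Fin n)) : Finset (Fin n) :=
  univ.filter fun x ↦ Γ (insert x T)

lemma mem_completers : x ∈ completers Γ T ↔ Γ (insert x T) := by
  simp [completers]

lemma disjoint_completers (hT : ¬ Γ T) : Disjoint (completers Γ T) T :=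
  disjoint_left.2 fun _ hx hxT ↦ hT (insert_eq_of_mem hxT ▸ mem_completers.1 hx)

lemma authorized_insert_erase (hpiv : ¬ HasPivot Γ T) (hx : x ∈ completers Γ T) (hxT : x ∉ T)
    (hi : i ∈ T) : Γ (insert x (T.erase i)) := by
  by_contra hΓ
  refine hpiv ⟨i, hi, _, subset_insert x _, ?_, hΓ, ?_⟩
  · simpa using ne_of_mem_of_not_mem hi hxT
  · rw [insert_comm, insert_erase hi]
    exact mem_completers.1 hx

lemma completers_subset_of_disjoint (hmono : Monotonic Γ) (hnc : NoCloning Γ) (hT : T.Nonempty)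
    (hΓT : ¬ Γ T) (hpiv : ¬ HasPivot Γ T) (hM : Γ M) (hMT : Disjoint M T) :
    completers Γ T ⊆ M := by
  intro x hx
  obtain ⟨i, hi⟩ := hT
  have hxT : x ∉ T := disjoint_left.1 (disjoint_completers hΓT) hx
  by_contra hxM
  refine not_disjoint_of_authorized hmono hnc hM (authorized_insert_erase hpiv hx hxT hi) ?_
  exact disjoint_insert_right.2 ⟨hxM, hMT.mono_right (erase_subset i T)⟩

lemma card_inter_eq_two_of_not_hasPivot (hT : #T = 3) (hpiv : ¬ HasPivot Γ T)
    (hnc : NoCloning Γ) (hM : IsMinimal Γ M) (hMT : ¬ Disjoint M T) : #(M ∩ T) = 2 := by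
  have hpos : 0 < #(M ∩ T) := card_pos.2 (not_disjoint_iff_nonempty_inter.1 hMT)
  have hne_one : #(M ∩ T) ≠ 1 := fun h ↦
    have ⟨_, hi⟩ := card_eq_one.1 h
    hpiv (hM.hasPivot_of_inter_eq_singleton hnc hi)
  have hlt : #(M ∩ T) < #T := card_lt_card <| inter_subset_right.ssubset_of_ne fun h ↦
    hpiv (hM.hasPivot_of_subset (card_pos.1 (by omega)) (inter_eq_right.1 h))
  omega

lemma not_authorized_of_not_hasPivot (hT : #T = 3) (hpiv : ¬ HasPivot Γ T)
    (hhom : ∀ A, IsMinimal Γ A → #A = 3) : ¬ Γ T := fun hΓ ↦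
  hpiv ((isMinimal_of_card_eq hhom hΓ hT).hasPivot_of_subset (card_pos.1 (by omega)) subset_rfl)

lemma exists_mem_completers_sdiff_eq (hT : #T = 3) (hpiv : ¬ HasPivot Γ T)
    (hhom : ∀ A, IsMinimal Γ A → #A = 3) (hmono : Monotonic Γ) (hnc : NoCloning Γ)
    (hM : IsMinimal Γ M) (hMT : ¬ Disjoint M T) : ∃ x ∈ completers Γ T, M \ T = {x} := by
  have hcard := card_sdiff_add_card_inter M T
  rw [card_inter_eq_two_of_not_hasPivot hT hpiv hnc hM hMT, hhom M hM] at hcard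
  obtain ⟨x, hx⟩ := card_eq_one.1 (Nat.succ.inj (Nat.succ.inj hcard))
  refine ⟨x, mem_completers.2 (hmono M _ hM.1 ?_), hx⟩
  rw [insert_eq, ← hx, sdiff_union_self_eq_union]
  exact subset_union_left

lemma completers_nonempty (hT : #T = 3) (hpiv : ¬ HasPivot Γ T)
    (hhom : ∀ A, IsMinimal Γ A → #A = 3) (hmono : Monotonic Γ) (hnc : NoCloning Γ)
    (hnr : NoRedundancy Γ) : (completers Γ T).Nonempty := by
  obtain ⟨i, hi⟩ := card_pos.1 (show 0 < #T by omega)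
  obtain ⟨M, hM, hiM⟩ := hnr i
  obtain ⟨x, hx, -⟩ := exists_mem_completers_sdiff_eq hT hpiv hhom hmono hnc hM
    (not_disjoint_iff.2 ⟨i, hiM, hi⟩)
  exact ⟨x, hx⟩

lemma authorized_completers (hT : #T = 3) (hpiv : ¬ HasPivot Γ T)
    (hhom : ∀ A, IsMinimal Γ A → #A = 3) (hmono : Monotonic Γ) (hnc : NoCloning Γ)
    (hnr : NoRedundancy Γ) : Γ (completers Γ T) := by
  by_contra hX
  obtain ⟨M, hMX, hM⟩ := exists_isMinimal_subset (authorized_compl hnc hX)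
  rw [subset_compl_iff_disjoint_left] at hMX
  by_cases hMT : Disjoint M T
  · have hXM := completers_subset_of_disjoint hmono hnc (card_pos.1 (by omega))
      (not_authorized_of_not_hasPivot hT hpiv hhom) hpiv hM.1 hMT
    exact (completers_nonempty hT hpiv hhom hmono hnc hnr).ne_empty
      (disjoint_self.1 (hMX.mono_right hXM))
  · obtain ⟨x, hx, hMx⟩ := exists_mem_completers_sdiff_eq hT hpiv hhom hmono hnc hM hMT
    exact disjoint_left.1 hMX hx (sdiff_subset (hMx.symm ▸ mem_singleton_self x))

lemma eq_completers_of_disjoint (hT : #T = 3) (hpiv : ¬ HasPivot Γ T)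
    (hhom : ∀ A, IsMinimal Γ A → #A = 3) (hmono : Monotonic Γ) (hnc : NoCloning Γ)
    (hnr : NoRedundancy Γ) (hM : IsMinimal Γ M) (hMT : Disjoint M T) :
    M = completers Γ T := by
  have hXM := completers_subset_of_disjoint hmono hnc (card_pos.1 (by omega))
    (not_authorized_of_not_hasPivot hT hpiv hhom) hpiv hM.1 hMT
  by_contra hne
  exact hM.2 _ (hXM.ssubset_of_ne (Ne.symm hne))
    (authorized_completers hT hpiv hhom hmono hnc hnr)

lemma card_completers (hT : #T = 3) (hpiv : ¬ HasPivot Γ T)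
    (hhom : ∀ A, IsMinimal Γ A → #A = 3) (hmono : Monotonic Γ) (hnc : NoCloning Γ)
    (hnr : NoRedundancy Γ) : #(completers Γ T) = 3 := by
  obtain ⟨M, hMX, hM⟩ :=
    exists_isMinimal_subset (authorized_completers hT hpiv hhom hmono hnc hnr)
  have hMT : Disjoint M T := Disjoint.mono_left hMX
    (disjoint_completers (not_authorized_of_not_hasPivot hT hpiv hhom))
  rw [← eq_completers_of_disjoint hT hpiv hhom hmono hnc hnr hM hMT, hhom M hM]

lemma completers_eq_compl (hT : #T = 3) (hpiv : ¬ HasPivot Γ T)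
    (hhom : ∀ A, IsMinimal Γ A → #A = 3) (hmono : Monotonic Γ) (hnc : NoCloning Γ)
    (hnr : NoRedundancy Γ) : completers Γ T = Tᶜ := by
  refine (subset_compl_iff_disjoint_right.2 (disjoint_completers
    (not_authorized_of_not_hasPivot hT hpiv hhom))).antisymm fun i hi ↦ ?_
  obtain ⟨M, hM, hiM⟩ := hnr i
  by_cases hMT : Disjoint M T
  · exact eq_completers_of_disjoint hT hpiv hhom hmono hnc hnr hM hMT ▸ hiM
  · obtain ⟨x, hx, hMx⟩ := exists_mem_completers_sdiff_eq hT hpiv hhom hmono hnc hM hMT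
    have hix : i ∈ M \ T := mem_sdiff.2 ⟨hiM, mem_compl.1 hi⟩
    rw [hMx, mem_singleton] at hix
    exact hix ▸ hx

lemma exists_authorized_card_eq_three_hasPivot_compl (hT : #T = 3) (hpiv : ¬ HasPivot Γ T)
    (hhom : ∀ A, IsMinimal Γ A → #A = 3) (hmono : Monotonic Γ) (hnc : NoCloning Γ)
    (hnr : NoRedundancy Γ) :
    ∃ N, Γ N ∧ #N = 3 ∧ #Nᶜ = 3 ∧ HasPivot Γ Nᶜ := by
  have hX := completers_eq_compl hT hpiv hhom hmono hnc hnr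
  have hXcard := card_completers hT hpiv hhom hmono hnc hnr
  obtain ⟨b, hb, c, hc, hbc⟩ := one_lt_card.1 (show 1 < #(completers Γ T) by omega)
  obtain ⟨r, hr⟩ := card_pos.1 (show 0 < #T by omega)
  have notMem_of_mem_completers {x} (hx : x ∈ completers Γ T) : x ∉ T := mem_compl.1 (hX ▸ hx)
  have authorized_triple {x} (hx : x ∈ completers Γ T) :
      Γ (insert x (T.erase r)) ∧ #(insert x (T.erase r)) = 3 := by
    have hxT := notMem_of_mem_completers hx
    refine ⟨authorized_insert_erase hpiv hx hxT hr, ?_⟩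
    rw [card_insert_of_notMem fun h ↦ hxT (mem_of_mem_erase h), card_erase_add_one hr, hT]
  obtain ⟨hΓb, hcardb⟩ := authorized_triple hb
  obtain ⟨hΓc, hcardc⟩ := authorized_triple hc
  refine ⟨_, hΓb, hcardb, ?_, (isMinimal_of_card_eq hhom hΓc hcardc).hasPivot_of_inter_eq_singleton
    hnc (i := c) ?_⟩
  · have hsix := card_add_card_compl T
    have hN := card_add_card_compl (insert b (T.erase r))
    rw [← hX] at hsix
    omega
  · have hcT := notMem_of_mem_completers hc
    grind [mem_compl]

end AccessStructures

section QSSStates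

variable {n : ℕ} {Γ : Finset (Fin n) → Prop} {ψ : (Fin (n + 1) → Fin 2) → ℂ}
  {A B T : Finset (Fin n)} {i : Fin n}

lemma zero_notMem_posOf (A : Finset (Fin n)) : 0 ∉ posOf A := by
  simp [posOf]

lemma succ_mem_posOf : i.succ ∈ posOf A ↔ i ∈ A := by
  simp [posOf]

lemma posOf_insert (i : Fin n) (A : Finset (Fin n)) :
    posOf (insert i A) = insert i.succ (posOf A) :=
  image_insert _ _ _

lemma card_posOf (A : Finset (Fin n)) : #(posOf A) = #A :=
  card_image_of_injective _ (Fin.succ_injective n)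

lemma compl_posOf_compl (A : Finset (Fin n)) : (posOf Aᶜ)ᶜ = insert 0 (posOf A) := by
  ext i
  cases i using Fin.cases <;> simp [zero_notMem_posOf, succ_mem_posOf]

lemma exists_posOf_eq {A : Finset (Fin (n + 1))} (h : 0 ∉ A) :
    ∃ T : Finset (Fin n), posOf T = A := by
  refine ⟨univ.filter (Fin.succ · ∈ A), ?_⟩
  ext i
  cases i using Fin.cases <;> simp [zero_notMem_posOf, succ_mem_posOf, h]

lemma IsPureQSSState.isDecoupled_of_isPivotal (hψ : IsPureQSSState Γ ψ) (h : IsPivotal Γ i B) :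
    IsDecoupled ψ (posOf B) i.succ := by
  obtain ⟨hi, hB, hiB⟩ := h
  have hi' : i.succ ∉ posOf B := succ_mem_posOf.not.2 hi
  have hrec := hψ.recover _ hiB
  rw [posOf_insert] at hrec
  have hdrop := Sent_le_insert_add hψ.normalized (k := i.succ) (A := insert 0 (posOf B))
    (by simp [hi'])
  rw [insert_comm] at hdrop
  refine isDecoupled_of_Sent_insert_eq hψ.normalized hi'
    ((Sent_insert_le hψ.normalized hi').antisymm ?_)
  linarith [hψ.secrecy B hB]

lemma IsPureQSSState.maximallyMixed_posOf_of_hasPivot (hψ : IsPureQSSState Γ ψ)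
    (h : ∀ S ⊆ T, S.Nonempty → HasPivot Γ S) : MaximallyMixed ψ (posOf T) := by
  induction T using Finset.strongInduction with
  | H T ih =>
    obtain rfl | hT := T.eq_empty_or_nonempty
    · exact maximallyMixed_empty hψ.normalized
    obtain ⟨i, hi, B, hTB, hiB⟩ := h T subset_rfl hT
    have hdec : IsDecoupled ψ (posOf (T.erase i)) i.succ :=
      (hψ.isDecoupled_of_isPivotal hiB).mono (succ_mem_posOf.not.2 hiB.1)
        (image_subset_image hTB)
    have hrest : MaximallyMixed ψ (posOf (T.erase i)) :=
      ih _ (erase_ssubset hi) fun S hS ↦ h S (hS.trans (erase_subset i T))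
    rw [← insert_erase hi, posOf_insert]
    exact hrest.insert (by simp [succ_mem_posOf]) hdec

lemma IsPureQSSState.card_compl_lt_card_of_maximallyMixed (hψ : IsPureQSSState Γ ψ) (hA : Γ A)
    (hmm : MaximallyMixed ψ (posOf Aᶜ)) : #Aᶜ < #A := by
  have hrec := hψ.recover A hA
  rw [← compl_posOf_compl, Sent_compl, hmm.Sent_eq, card_posOf] at hrec
  have hR := Sent_le_card_mul_log_two hψ.normalized {0}
  have hSA := Sent_le_card_mul_log_two hψ.normalized (posOf A)
  rw [card_singleton, Nat.cast_one] at hR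
  rw [card_posOf] at hSA
  have hmul : (#Aᶜ + 1) * Real.log 2 ≤ #A * Real.log 2 := by linarith
  exact_mod_cast le_of_mul_le_mul_right hmul (Real.log_pos one_lt_two)

lemma IsPureQSSState.log_two_le_Sent_zero (hψ : IsPureQSSState Γ ψ) (hA : Γ A) :
    Real.log 2 ≤ Sent ψ {0} := by
  linarith [hψ.recover A hA, Sent_le_insert_add hψ.normalized (zero_notMem_posOf A)]

lemma IsPureQSSState.isDecoupled_zero (hnc : NoCloning Γ) (hψ : IsPureQSSState Γ ψ)
    (hB : ¬ Γ B) : IsDecoupled ψ (posOf B) 0 := by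
  have hzero := zero_notMem_posOf B
  refine isDecoupled_of_Sent_insert_eq hψ.normalized hzero
    ((Sent_insert_le hψ.normalized hzero).antisymm ?_)
  linarith [hψ.secrecy B hB, hψ.log_two_le_Sent_zero (authorized_compl hnc hB)]

lemma IsPureQSSState.hasPivot_of_card_le_three (hmono : Monotonic Γ) (hnc : NoCloning Γ)
    (hnr : NoRedundancy Γ) (hhom : ∀ A, IsMinimal Γ A → #A = 3) (hψ : IsPureQSSState Γ ψ)
    (hT : T.Nonempty) (hcard : #T ≤ 3) : HasPivot Γ T := by
  obtain htwo | hthree := Nat.le_or_eq_of_le_succ hcard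
  · exact hasPivot_of_card_le_two hnc hnr hT htwo
  by_contra hpiv
  obtain ⟨N, hN, hcardN, hcardNc, hpivN⟩ :=
    exists_authorized_card_eq_three_hasPivot_compl hthree hpiv hhom hmono hnc hnr
  have hmm : MaximallyMixed ψ (posOf Nᶜ) := hψ.maximallyMixed_posOf_of_hasPivot fun S hS hne ↦ by
    obtain rfl | hss := hS.eq_or_ssubset
    · exact hpivN
    · have hlt := card_lt_card hss
      exact hasPivot_of_card_le_two hnc hnr hne (by omega)
  have hlt := hψ.card_compl_lt_card_of_maximallyMixed hN hmm
  omega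

end QSSStates

theorem stmt8 (n : ℕ) (hn : 5 ≤ n) (Γ : Finset (Fin n) → Prop)
    (hmono : Monotonic Γ) (hnc : NoCloning Γ) (hnr : NoRedundancy Γ)
    (hhom : ∀ A : Finset (Fin n), IsMinimal Γ A → A.card = 3)
    (ψ : (Fin (n + 1) → Fin 2) → ℂ) (hψ : IsPureQSSState Γ ψ) :
    ∀ A : Finset (Fin (n + 1)), A.card ≤ 3 → MaximallyMixed ψ A := by
  have players (T : Finset (Fin n)) (hT : #T ≤ 3) : MaximallyMixed ψ (posOf T) :=
    hψ.maximallyMixed_posOf_of_hasPivot fun S hS hne ↦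
      hψ.hasPivot_of_card_le_three hmono hnc hnr hhom hne ((card_le_card hS).trans hT)
  intro A hA
  by_cases hzero : 0 ∈ A
  · obtain ⟨T, hT⟩ := exists_posOf_eq (notMem_erase 0 A)
    have hcard : #T < 3 := by
      rw [← card_posOf, hT]
      exact (card_erase_lt_of_mem hzero).trans_le hA
    have hunauth : ¬ Γ T := not_authorized_of_card_lt hhom hcard
    rw [← insert_erase hzero, ← hT]
    exact (players T hcard.le).insert (zero_notMem_posOf T) (hψ.isDecoupled_zero hnc hunauth)
  · obtain ⟨T, rfl⟩ := exists_posOf_eq hzero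
    exact players T (card_posOf T ▸ hA)
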